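/- Let Ω ⊆ ℂ be a nonempty connected open set, let 𝔻 = {w ∈ ℂ : |w| < 1} be the open unit disk, and let f : Ω → 𝔻 be a continuously real-differentiable proper map such that for every z ∈ Ω, f_z(z) ≠ 0 and |μ_f(z)| < 1. Then f is a bijection from Ω onto 𝔻. -/

import Mathlib

/-- The Wirtinger derivative f_z(z) = (f_x(z) - i·f_y(z))/2, where f_x, f_y are the
real Fréchet derivative of f at z applied to 1 and to i respectively. -/
noncomputable def wirtZ (f : ℂ → ℂ) (z : ℂ) : ℂ :=
  (fderiv ℝ f z 1 - Complex.I * fderiv ℝ f z Complex.I) / 2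

/-- The Wirtinger derivative f_zbar(z) = (f_x(z) + i·f_y(z))/2. -/
noncomputable def wirtZBar (f : ℂ → ℂ) (z : ℂ) : ℂ :=
  (fderiv ℝ f z 1 + Complex.I * fderiv ℝ f z Complex.I) / 2

/-- The Beltrami coefficient μ_f(z) = f_zbar(z) / f_z(z). -/
noncomputable def beltrami (f : ℂ → ℂ) (z : ℂ) : ℂ := wirtZBar f z / wirtZ f z

/-!
Since `Df v = f_z v + f_zbar (conj v)` and `|f_zbar| < |f_z|`, every derivative of `f` is
invertible, so `f` is a local homeomorphism. A proper local homeomorphism is a covering map: it is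
closed, and its fibers are compact and discrete, hence finite. Over a simply connected base the
identity lifts to a global section, and by uniqueness of lifts this section is inverse to a covering
map with connected total space.
-/

open Set

section Covering

variable {X Y : Type*} [TopologicalSpace X] [TopologicalSpace Y] {f : X → Y}

theorem finite_preimage_singleton_of_isProperMap_of_isLocalHomeomorph (hproper : IsProperMap f)
    (hlocal : IsLocalHomeomorph f) (y : Y) : (f ⁻¹' {y}).Finite := by
  have hdiscrete : IsDiscrete (f ⁻¹' {y}) :=
    (hlocal.isLocalHomeomorphOn.mono (subset_univ _)).isDiscrete_of_image
      ((subsingleton_singleton.anti (image_preimage_subset f {y})).isDiscrete)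
  exact (hproper.isCompact_preimage isCompact_singleton).finite hdiscrete

theorem isCoveringMap_of_isProperMap_of_isLocalHomeomorph [T2Space X] (hproper : IsProperMap f)
    (hlocal : IsLocalHomeomorph f) : IsCoveringMap f :=
  isCoveringMap_iff_isCoveringMapOn_univ.mpr <|
    hproper.isClosedMap.isCoveringMapOn_of_isLocalHomeomorphOn
      (fun y _ ↦ finite_preimage_singleton_of_isProperMap_of_isLocalHomeomorph hproper hlocal y)
      hlocal.isLocalHomeomorphOn

theorem surjective_of_isOpenMap_of_isClosedMap [Nonempty X] [PreconnectedSpace Y]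
    (hopen : IsOpenMap f) (hclosed : IsClosedMap f) : Function.Surjective f :=
  range_eq_univ.mp <|
    IsClopen.eq_univ ⟨hclosed.isClosed_range, hopen.isOpen_range⟩ (range_nonempty f)

theorem injective_of_isCoveringMap [PreconnectedSpace X] [SimplyConnectedSpace Y]
    [LocallyPathConnectedSpace Y] (hcover : IsCoveringMap f) : Function.Injective f := by
  intro a b hab
  obtain ⟨σ, ⟨hσa, hσ⟩, -⟩ :=
    hcover.existsUnique_continuousMap_lifts (ContinuousMap.id Y) (f a) a rfl
  -- Both `σ ∘ f` and `id` lift `f`, and they agree at `a`.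
  have hleft : σ ∘ f = id :=
    hcover.eq_of_comp_eq (σ.continuous.comp hcover.continuous) continuous_id
      (congrArg (· ∘ f) hσ) a hσa
  calc a = σ (f a) := hσa.symm
    _ = σ (f b) := congrArg σ hab
    _ = b := congrFun hleft b

theorem bijective_of_isProperMap_of_isLocalHomeomorph [T2Space X] [ConnectedSpace X]
    [SimplyConnectedSpace Y] [LocallyPathConnectedSpace Y] (hproper : IsProperMap f)
    (hlocal : IsLocalHomeomorph f) : Function.Bijective f :=
  ⟨injective_of_isCoveringMap (isCoveringMap_of_isProperMap_of_isLocalHomeomorph hproper hlocal),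
    surjective_of_isOpenMap_of_isClosedMap hlocal.isOpenMap hproper.isClosedMap⟩

end Covering

section Restrict

variable {X Y : Type*} {f : X → Y} {s : Set X} {t : Set Y}

theorem val_image_preimage_mapsToRestrict (hmaps : MapsTo f s t) (K : Set t) :
    Subtype.val '' (hmaps.restrict f s t ⁻¹' K) = s ∩ f ⁻¹' (Subtype.val '' K) := by
  ext x
  constructor
  · rintro ⟨z, hz, rfl⟩
    exact ⟨z.2, _, hz, rfl⟩
  · rintro ⟨hx, y, hy, hyx⟩
    obtain rfl : y = hmaps.restrict f s t ⟨x, hx⟩ := Subtype.ext hyx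
    exact ⟨⟨x, hx⟩, hy, rfl⟩

variable [TopologicalSpace X] [TopologicalSpace Y]

theorem isLocalHomeomorph_mapsToRestrict (hs : IsOpen s) (ht : IsOpen t)
    (hf : IsLocalHomeomorphOn f s) (hmaps : MapsTo f s t) :
    IsLocalHomeomorph (hmaps.restrict f s t) := by
  have hcomp : IsLocalHomeomorph (Subtype.val ∘ hmaps.restrict f s t) :=
    isLocalHomeomorph_iff_isLocalHomeomorphOn_univ.mpr <|
      hf.comp hs.isOpenEmbedding_subtypeVal.isLocalHomeomorph.isLocalHomeomorphOn fun x _ ↦ x.2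
  exact hcomp.of_comp ht.isOpenEmbedding_subtypeVal.isLocalHomeomorph
    (hf.continuousOn.mapsToRestrict hmaps)

theorem isProperMap_mapsToRestrict [T2Space Y] [CompactlyCoherentSpace t]
    (hf : ContinuousOn f s) (hmaps : MapsTo f s t)
    (hproper : ∀ K ⊆ t, IsCompact K → IsCompact (s ∩ f ⁻¹' K)) :
    IsProperMap (hmaps.restrict f s t) := by
  refine isProperMap_iff_isCompact_preimage.mpr ⟨hf.mapsToRestrict hmaps, fun K hK ↦ ?_⟩
  rw [Subtype.isCompact_iff, val_image_preimage_mapsToRestrict]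
  exact hproper _ (Subtype.coe_image_subset t K) (hK.image continuous_subtype_val)

theorem bijOn_of_isLocalHomeomorphOn [T2Space X] [T2Space Y] [CompactlyCoherentSpace t]
    [LocallyPathConnectedSpace t] (hs : IsOpen s) (hs_conn : IsConnected s) (ht : IsOpen t)
    (ht_simply : IsSimplyConnected t) (hf : IsLocalHomeomorphOn f s) (hmaps : MapsTo f s t)
    (hproper : ∀ K ⊆ t, IsCompact K → IsCompact (s ∩ f ⁻¹' K)) : BijOn f s t := by
  have := isConnected_iff_connectedSpace.mp hs_conn
  have := ht_simply.simplyConnectedSpace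
  have hbij : Function.Bijective (hmaps.restrict f s t) :=
    bijective_of_isProperMap_of_isLocalHomeomorph
      (isProperMap_mapsToRestrict hf.continuousOn hmaps hproper)
      (isLocalHomeomorph_mapsToRestrict hs ht hf hmaps)
  exact ⟨hmaps, hmaps.restrict_inj.mp hbij.injective,
    hmaps.restrict_surjective_iff.mp hbij.surjective⟩

end Restrict

theorem isLocalHomeomorphOn_of_contDiffOn {𝕜 E F : Type*} [RCLike 𝕜] [NormedAddCommGroup E]
    [NormedSpace 𝕜 E] [CompleteSpace E] [NormedAddCommGroup F] [NormedSpace 𝕜 F] {f : E → F}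
    {s : Set E} {n : WithTop ℕ∞} (hs : IsOpen s) (hf : ContDiffOn 𝕜 n f s) (hn : n ≠ 0)
    (hinv : ∀ x ∈ s, (fderiv 𝕜 f x).IsInvertible) : IsLocalHomeomorphOn f s := by
  intro x hx
  have hfx : ContDiffAt 𝕜 n f x := hf.contDiffAt (hs.mem_nhds hx)
  obtain ⟨f', hf'⟩ := hinv x hx
  have hderiv : HasFDerivAt f (f' : E →L[𝕜] F) x :=
    hf' ▸ (hfx.differentiableAt hn).hasFDerivAt
  exact ⟨hfx.toOpenPartialHomeomorph f hderiv hn,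
    hfx.mem_toOpenPartialHomeomorph_source hderiv hn, rfl⟩

theorem isInvertible_of_injective {𝕜 E : Type*} [NontriviallyNormedField 𝕜] [CompleteSpace 𝕜]
    [AddCommGroup E] [TopologicalSpace E] [IsTopologicalAddGroup E] [T2Space E] [Module 𝕜 E]
    [ContinuousSMul 𝕜 E] [FiniteDimensional 𝕜 E] {L : E →L[𝕜] E} (hL : Function.Injective L) :
    L.IsInvertible :=
  ⟨(LinearEquiv.ofInjectiveEndo (L : E →ₗ[𝕜] E) hL).toContinuousLinearEquiv, by ext; rfl⟩

section Wirtinger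

open scoped ComplexConjugate

theorem fderiv_eq_wirtZ_mul_add_wirtZBar_mul_conj (f : ℂ → ℂ) (z v : ℂ) :
    fderiv ℝ f z v = wirtZ f z * v + wirtZBar f z * conj v := by
  have hv : v = v.re • (1 : ℂ) + v.im • Complex.I := by
    simp [Complex.re_add_im]
  have hfderiv : fderiv ℝ f z v = v.re * fderiv ℝ f z 1 + v.im * fderiv ℝ f z Complex.I := by
    conv_lhs => rw [hv]
    rw [map_add, map_smul, map_smul, Complex.real_smul, Complex.real_smul]
  have hadd : v + conj v = 2 * v.re := by rw [Complex.add_conj]; push_cast; rfl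
  have hsub : v - conj v = 2 * v.im * Complex.I := by rw [Complex.sub_conj]; push_cast; rfl
  rw [hfderiv, wirtZ, wirtZBar]
  linear_combination -(fderiv ℝ f z 1 / 2) * hadd + (Complex.I * fderiv ℝ f z Complex.I / 2) * hsub
    + v.im * fderiv ℝ f z Complex.I * Complex.I_sq

theorem eq_zero_of_mul_add_mul_conj_eq_zero {𝕜 : Type*} [RCLike 𝕜] {a b v : 𝕜}
    (hab : ‖b‖ < ‖a‖) (h : a * v + b * conj v = 0) : v = 0 := by
  have hnorm : ‖a‖ * ‖v‖ = ‖b‖ * ‖v‖ := by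
    simpa only [norm_mul, norm_neg, RCLike.norm_conj] using
      congrArg norm (eq_neg_of_add_eq_zero_left h)
  by_contra hv
  exact hab.ne' (mul_right_cancel₀ (norm_ne_zero_iff.mpr hv) hnorm)

theorem norm_wirtZBar_lt_norm_wirtZ {f : ℂ → ℂ} {z : ℂ} (hfz : wirtZ f z ≠ 0)
    (hmu : ‖beltrami f z‖ < 1) : ‖wirtZBar f z‖ < ‖wirtZ f z‖ := by
  rwa [beltrami, norm_div, div_lt_one (norm_pos_iff.mpr hfz)] at hmu

theorem isInvertible_fderiv_of_norm_wirtZBar_lt_norm_wirtZ {f : ℂ → ℂ} {z : ℂ}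
    (h : ‖wirtZBar f z‖ < ‖wirtZ f z‖) : (fderiv ℝ f z).IsInvertible := by
  refine isInvertible_of_injective <| (injective_iff_map_eq_zero _).mpr fun v hv ↦ ?_
  rw [fderiv_eq_wirtZ_mul_add_wirtZBar_mul_conj] at hv
  exact eq_zero_of_mul_add_mul_conj_eq_zero h hv

end Wirtinger

theorem isSimplyConnected_of_convex {E : Type*} [AddCommGroup E] [Module ℝ E] [TopologicalSpace E]
    [ContinuousAdd E] [ContinuousSMul ℝ E] {s : Set E} (hs : Convex ℝ s) (hne : s.Nonempty) :
    IsSimplyConnected s :=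
  have := hs.contractibleSpace hne
  inferInstanceAs (SimplyConnectedSpace s)

theorem proper_qc_map_bijective_general {E F : Type*} [NormedAddCommGroup E] [NormedSpace ℝ E]
    [CompleteSpace E] [NormedAddCommGroup F] [NormedSpace ℝ F] {f : E → F} {s : Set E} {t : Set F}
    (hs : IsOpen s) (hs_conn : IsConnected s) (ht : IsOpen t) (ht_simply : IsSimplyConnected t)
    (hf : ContDiffOn ℝ 1 f s) (hinv : ∀ x ∈ s, (fderiv ℝ f x).IsInvertible)
    (hmaps : MapsTo f s t) (hproper : ∀ K ⊆ t, IsCompact K → IsCompact (s ∩ f ⁻¹' K)) :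
    BijOn f s t :=
  have := ht.locallyPathConnectedSpace
  bijOn_of_isLocalHomeomorphOn hs hs_conn ht ht_simply
    (isLocalHomeomorphOn_of_contDiffOn hs hf one_ne_zero hinv) hmaps hproper

/-- A proper, continuously differentiable map from a nonempty connected open set
into the unit disk with f_z ≠ 0 and |μ_f| < 1 everywhere is a bijection onto the disk. -/
theorem proper_qc_map_bijective (Ω : Set ℂ) (f : ℂ → ℂ)
    (hΩo : IsOpen Ω) (hΩne : Ω.Nonempty) (hΩc : IsPreconnected Ω)
    (hC1 : ContDiffOn ℝ 1 f Ω)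
    (hmaps : Set.MapsTo f Ω (Metric.ball (0 : ℂ) 1))
    (hproper : ∀ K : Set ℂ, K ⊆ Metric.ball (0 : ℂ) 1 → IsCompact K →
      IsCompact (Ω ∩ f ⁻¹' K))
    (hfz : ∀ z ∈ Ω, wirtZ f z ≠ 0) (hmu : ∀ z ∈ Ω, ‖beltrami f z‖ < 1) :
    Set.BijOn f Ω (Metric.ball (0 : ℂ) 1) :=
  proper_qc_map_bijective_general hΩo ⟨hΩne, hΩc⟩ Metric.isOpen_ball
    (isSimplyConnected_of_convex (convex_ball 0 1) ⟨0, Metric.mem_ball_self one_pos⟩) hC1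
    (fun z hz ↦ isInvertible_fderiv_of_norm_wirtZBar_lt_norm_wirtZ <|
      norm_wirtZBar_lt_norm_wirtZ (hfz z hz) (hmu z hz))
    hmaps hproper
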